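/- arXiv:1303.3724 — 8 statements merged into one kernel-verified Lean document; each statement's English description precedes it below -/
import Mathlib

section
/- Let m, k ∈ ℕ with k ≥ 1 and let F₁, …, F_k ∈ ℝ⟦X*⟧ be nonzero generalised power series in m variables. Then F₁, …, F_k are all normal if and only if the product F₁ · … · F_k is normal. -/
open scoped NNReal

/-- A nonzero generalised power series `F ∈ ℝ⟦X*⟧` is *normal* if
`F = X^α · U` for some exponent `α ∈ [0,∞)^m` and some unit `U` of `ℝ⟦X*⟧`. -/
def IsNormalSeries {m : ℕ} (F : HahnSeries (Fin m → ℝ≥0) ℝ) : Prop :=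
  ∃ (α : Fin m → ℝ≥0) (U : HahnSeries (Fin m → ℝ≥0) ℝ),
    IsUnit U ∧ F = HahnSeries.single α (1 : ℝ) * U

/-!
A series is normal exactly when it divides a monomial, so normality passes to factors.

Suppose `F * G = X^γ`. For each coordinate `i`, the exponents embed additively and monotonically
into a linearly ordered monoid in which the `i`-th coordinate is compared first. The least
exponents of `F` and `G` there cannot cancel in the product, so they add up to `γ`; hence
`γ i ≤ α i + β i` for all exponents `α` of `F` and `β` of `G`. Since `γ = a + b` for some exponents
`a` of `F` and `b` of `G`, it follows that `X^a` divides `F` and `X^b` divides `G`, and the two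
quotients have product `1`.
-/

open HahnSeries

theorem isPWO_preimage_of_reflect_le {α β : Type*} [Preorder α] [Preorder β] {s : Set β}
    (hs : s.IsPWO) {f : α → β} (hf : ∀ ⦃x y⦄, f x ≤ f y → x ≤ y) : (f ⁻¹' s).IsPWO := fun u ↦
  let ⟨m, n, hmn, hle⟩ := hs fun n ↦ ⟨f (u n), (u n).2⟩
  ⟨m, n, hmn, hf hle⟩

section MonomialDivision

variable {Γ R : Type*} [AddCommMonoid Γ] [PartialOrder Γ] [IsOrderedCancelAddMonoid Γ] [Semiring R]

theorem isLeftRegular_single_one (a : Γ) : IsLeftRegular (single a (1 : R)) := by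
  intro F G hFG
  ext δ
  simpa only [coeff_single_mul_add, one_mul] using congrArg (fun S ↦ S.coeff (δ + a)) hFG

theorem le_of_mem_support_single_mul [CanonicallyOrderedAdd Γ] {a δ : Γ} {r : R}
    {F : HahnSeries Γ R} (hδ : δ ∈ (single a r * F).support) : a ≤ δ := by
  obtain ⟨x, hx, y, -, rfl⟩ := support_mul_subset hδ
  obtain rfl := eq_of_mem_support_single hx
  exact le_self_add

theorem single_one_dvd_iff [CanonicallyOrderedAdd Γ] {a : Γ} {F : HahnSeries Γ R} :
    single a 1 ∣ F ↔ ∀ δ ∈ F.support, a ≤ δ := by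
  refine ⟨?_, fun ha ↦ ?_⟩
  · rintro ⟨Q, rfl⟩ δ hδ
    exact le_of_mem_support_single_mul hδ
  · let Q : HahnSeries Γ R :=
      ⟨fun δ ↦ F.coeff (δ + a),
        isPWO_preimage_of_reflect_le F.isPWO_support fun _ _ ↦ le_of_add_le_add_right⟩
    refine ⟨Q, ?_⟩
    ext δ
    by_cases hδ : a ≤ δ
    · obtain ⟨c, rfl⟩ := exists_add_of_le hδ
      rw [add_comm a c, coeff_single_mul_add, one_mul]
    · rw [Function.notMem_support.mp (mt (ha δ) hδ),
        Function.notMem_support.mp (mt le_of_mem_support_single_mul hδ)]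

end MonomialDivision

section LinearlyOrderedImage

theorem exists_mem_support_isMinOn {Γ L R : Type*} [PartialOrder Γ] [LinearOrder L] [Zero R]
    {φ : Γ → L} (hmono : Monotone φ) {F : HahnSeries Γ R} (hF : F.support.Nonempty) :
    ∃ α ∈ F.support, IsMinOn φ F.support α := by
  obtain ⟨α, hα, hmin⟩ :=
    Set.IsPWO.exists_minimalFor φ F.support (F.isPWO_support.image_of_monotone hmono) hF
  exact ⟨α, hα, fun δ hδ ↦ (le_total (φ α) (φ δ)).elim id (hmin hδ)⟩

variable {Γ L R : Type*} [AddCommMonoid Γ] [PartialOrder Γ] [IsOrderedCancelAddMonoid Γ]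
  [AddCommMonoid L] [LinearOrder L] [IsOrderedCancelAddMonoid L] [NonUnitalNonAssocSemiring R]
  {φ : Γ →+ L} {F G : HahnSeries Γ R}

theorem coeff_mul_add_of_isMinOn (hinj : Function.Injective φ) {α β : Γ}
    (hα : IsMinOn φ F.support α) (hβ : IsMinOn φ G.support β) :
    (F * G).coeff (α + β) = F.coeff α * G.coeff β := by
  rw [coeff_mul]
  refine Finset.sum_eq_single (α, β) ?_ ?_
  · rintro ⟨a, b⟩ hab hne
    obtain ⟨ha, hb, hadd⟩ := Finset.mem_antidiagonal.mp hab
    have hφ : φ α + φ β = φ a + φ b := by rw [← map_add, ← map_add, hadd]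
    obtain ⟨hαa, hβb⟩ := (add_eq_add_iff_eq_and_eq (hα ha) (hβ hb)).mp hφ
    exact absurd (Prod.ext (hinj hαa.symm) (hinj hβb.symm)) hne
  · intro hαβ
    by_contra hne
    exact hαβ (Finset.mem_antidiagonal.mpr
      ⟨left_ne_zero_of_mul hne, right_ne_zero_of_mul hne, rfl⟩)

theorem exists_mem_support_mul_forall_map_le [NoZeroDivisors R] (hmono : Monotone φ)
    (hinj : Function.Injective φ) (hF : F.support.Nonempty) (hG : G.support.Nonempty) :
    ∃ ε ∈ (F * G).support, ∀ α ∈ F.support, ∀ β ∈ G.support, φ ε ≤ φ (α + β) := by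
  obtain ⟨α₀, hα₀, hαmin⟩ := exists_mem_support_isMinOn hmono hF
  obtain ⟨β₀, hβ₀, hβmin⟩ := exists_mem_support_isMinOn hmono hG
  refine ⟨α₀ + β₀, ?_, fun α hα β hβ ↦ ?_⟩
  · rw [mem_support, coeff_mul_add_of_isMinOn hinj hαmin hβmin]
    exact mul_ne_zero hα₀ hβ₀
  · rw [map_add, map_add]
    exact add_le_add (hαmin hα) (hβmin hβ)

end LinearlyOrderedImage

section CoordinateFirstLex

variable {ι : Type*} {M : ι → Type*} [∀ i, AddCommMonoid (M i)]

/-- The embedding of a product of monoids into the lexicographic product `M i ×ₗ Lex (∀ j, M j)`,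
which linearly orders the tuples by their `i`-th coordinate first. The `i`-th coordinate is
repeated in the second factor, so that no reordering of the index type is needed. -/
def coordFirstLex (i : ι) : (∀ j, M j) →+ M i ×ₗ Lex (∀ j, M j) where
  toFun x := toLex (x i, toLex x)
  map_zero' := rfl
  map_add' _ _ := rfl

theorem coordFirstLex_injective (i : ι) : Function.Injective (coordFirstLex (M := M) i) :=
  fun _ _ h ↦ toLex.injective (congrArg Prod.snd (toLex.injective h))

variable [LinearOrder ι] [∀ i, PartialOrder (M i)]

theorem coordFirstLex_monotone [WellFoundedLT ι] (i : ι) :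
    Monotone (coordFirstLex (M := M) i) :=
  fun _ _ h ↦ Prod.Lex.toLex_mono ⟨h i, Pi.toLex_monotone h⟩

theorem apply_le_of_coordFirstLex_le {i : ι} {x y : ∀ j, M j}
    (h : coordFirstLex i x ≤ coordFirstLex i y) : x i ≤ y i :=
  Prod.Lex.monotone_fst_ofLex h

end CoordinateFirstLex

/-- Normality of a Hahn series with arbitrary exponents and coefficients: being a monomial with
coefficient `1` up to a unit factor. -/
def IsNormalHahnSeries {Γ R : Type*} [AddCommMonoid Γ] [PartialOrder Γ]
    [IsOrderedCancelAddMonoid Γ] [Semiring R] (F : HahnSeries Γ R) : Prop :=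
  ∃ α : Γ, Associated (single α 1) F

theorem isNormalSeries_iff_isNormalHahnSeries {m : ℕ} {F : HahnSeries (Fin m → ℝ≥0) ℝ} :
    IsNormalSeries F ↔ IsNormalHahnSeries F := by
  refine exists_congr fun α ↦ ⟨?_, ?_⟩
  · rintro ⟨_, ⟨u, rfl⟩, hF⟩
    exact ⟨u, hF.symm⟩
  · rintro ⟨u, hF⟩
    exact ⟨u, u.isUnit, hF.symm⟩

section ArbitraryExponents

variable {Γ R : Type*} [AddCommMonoid Γ] [PartialOrder Γ] [IsOrderedCancelAddMonoid Γ]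

theorem IsNormalHahnSeries.one [Semiring R] : IsNormalHahnSeries (1 : HahnSeries Γ R) :=
  ⟨0, Associated.refl 1⟩

theorem IsNormalHahnSeries.mul [CommSemiring R] {F G : HahnSeries Γ R} :
    IsNormalHahnSeries F → IsNormalHahnSeries G → IsNormalHahnSeries (F * G) := by
  rintro ⟨a, ha⟩ ⟨b, hb⟩
  refine ⟨a + b, ?_⟩
  simpa only [single_mul_single, one_mul] using ha.mul_mul hb

end ArbitraryExponents

section ProductExponents

variable {ι R : Type*} {M : ι → Type*} [∀ i, AddCommMonoid (M i)] [∀ i, LinearOrder (M i)]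
  [∀ i, IsOrderedCancelAddMonoid (M i)] [∀ i, CanonicallyOrderedAdd (M i)]

theorem le_add_of_single_one_dvd_mul [Semiring R] [NoZeroDivisors R]
    {F G : HahnSeries (∀ i, M i) R} {γ α β : ∀ i, M i} (hγ : single γ 1 ∣ F * G)
    (hα : α ∈ F.support) (hβ : β ∈ G.support) : γ ≤ α + β := by
  obtain ⟨_, _⟩ := exists_wellFoundedLT ι
  intro i
  obtain ⟨ε, hε, hle⟩ := exists_mem_support_mul_forall_map_le
    (coordFirstLex_monotone i) (coordFirstLex_injective i) ⟨α, hα⟩ ⟨β, hβ⟩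
  calc
    γ i ≤ ε i := single_one_dvd_iff.mp hγ ε hε i
    _ ≤ (α + β) i := apply_le_of_coordFirstLex_le (hle α hα β hβ)

variable [CommSemiring R] [NoZeroDivisors R] {F G : HahnSeries (∀ i, M i) R}

theorem isNormalHahnSeries_of_mul_eq_single_one {γ : ∀ i, M i} (hFG : F * G = single γ 1) :
    IsNormalHahnSeries F := by
  cases subsingleton_or_nontrivial R
  · exact ⟨0, .of_eq (Subsingleton.elim _ _)⟩
  have hγ : γ ∈ (F * G).support := by simp [hFG]
  obtain ⟨a, ha, b, hb, rfl⟩ := support_mul_subset hγ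
  have hle {α β : ∀ i, M i} : α ∈ F.support → β ∈ G.support → a + b ≤ α + β :=
    le_add_of_single_one_dvd_mul hFG.symm.dvd
  obtain ⟨F', rfl⟩ := single_one_dvd_iff.mpr fun α hα ↦ le_of_add_le_add_right (hle hα hb)
  obtain ⟨G', rfl⟩ := single_one_dvd_iff.mpr fun β hβ ↦ le_of_add_le_add_left (hle ha hβ)
  have hunit : F' * G' = 1 := by
    apply isLeftRegular_single_one (a + b)
    calc
      single (a + b) 1 * (F' * G') = single a 1 * F' * (single b 1 * G') := by
        rw [mul_mul_mul_comm, single_mul_single, one_mul]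
      _ = single (a + b) 1 * 1 := by rw [hFG, mul_one]
  exact ⟨a, associated_mul_unit_right _ _ (.of_mul_eq_one G' hunit)⟩

theorem isNormalHahnSeries_iff_dvd_single_one :
    IsNormalHahnSeries F ↔ ∃ γ, F ∣ single γ 1 := by
  refine ⟨fun ⟨γ, hγ⟩ ↦ ⟨γ, hγ.symm.dvd⟩, ?_⟩
  rintro ⟨γ, G, hG⟩
  exact isNormalHahnSeries_of_mul_eq_single_one hG.symm

theorem IsNormalHahnSeries.of_dvd (hFG : F ∣ G) (hG : IsNormalHahnSeries G) :
    IsNormalHahnSeries F := by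
  obtain ⟨γ, hγ⟩ := isNormalHahnSeries_iff_dvd_single_one.mp hG
  exact isNormalHahnSeries_iff_dvd_single_one.mpr ⟨γ, hFG.trans hγ⟩

theorem all_normal_iff_prod_normal_general {κ : Type*} (s : Finset κ)
    (F : κ → HahnSeries (∀ i, M i) R) :
    (∀ k ∈ s, IsNormalHahnSeries (F k)) ↔ IsNormalHahnSeries (∏ k ∈ s, F k) :=
  ⟨Finset.prod_induction F IsNormalHahnSeries (fun _ _ ↦ .mul) .one,
    fun hprod _ hk ↦ hprod.of_dvd (Finset.dvd_prod_of_mem F hk)⟩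

end ProductExponents

/-- Nonzero generalised power series `F₁, …, F_k` (`k ≥ 1`) are all
normal if and only if their product `F₁ ⋯ F_k` is normal. -/
theorem all_normal_iff_prod_normal (m k : ℕ) (hk : 1 ≤ k)
    (F : Fin k → HahnSeries (Fin m → ℝ≥0) ℝ) (hF : ∀ i, F i ≠ 0) :
    (∀ i, IsNormalSeries (F i)) ↔ IsNormalSeries (∏ i, F i) := by
  simpa only [isNormalSeries_iff_isNormalHahnSeries, Finset.mem_univ, true_imp_iff] using
    all_normal_iff_prod_normal_general Finset.univ F
end

section
/- Let m ∈ ℕ and let F₁, F₂ ∈ ℝ⟦X*⟧ be generalised power series in m variables such that F₁, F₂ and F₁ − F₂ are all normal. Then F₁ divides F₂ in ℝ⟦X*⟧ or F₂ divides F₁ in ℝ⟦X*⟧. -/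
/-!
The exponent of a normal series is the least element of its support. Let `α`, `β`, `γ` be the least
exponents of `F₁`, `F₂` and `F₁ - F₂`. Then `γ` lies in the support of `F₁` or in that of `F₂`. In
the first case `α ≤ γ`, and `β` lies in the support of `F₁` or of `F₁ - F₂`, so that `α ≤ β` or
`α ≤ γ ≤ β`; the second case gives `β ≤ α` in the same way. Comparable exponents mean that one
series divides the other.
-/

open scoped NNReal

open HahnSeries

section Support

variable {Γ R : Type*} [PartialOrder Γ] [AddGroup R] {F G : HahnSeries Γ R} {α β γ : Γ}

theorem support_subset_support_sub_union (F G : HahnSeries Γ R) :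
    F.support ⊆ (F - G).support ∪ G.support := by
  simpa only [sub_add_cancel] using support_add_subset (F - G) G

theorem support_sub_comm (F G : HahnSeries Γ R) : (F - G).support = (G - F).support := by
  rw [← support_neg, neg_sub]

theorem le_of_mem_support_of_mem_lowerBounds_support_sub (hα : α ∈ lowerBounds F.support)
    (hβ : β ∈ G.support) (hγF : γ ∈ F.support) (hγ : γ ∈ lowerBounds (G - F).support) :
    α ≤ β := by
  rcases support_subset_support_sub_union G F hβ with hβ_sub | hβF
  · exact (hα hγF).trans (hγ hβ_sub)
  · exact hα hβF

theorem le_or_le_of_isLeast_support_sub (hF : IsLeast F.support α) (hG : IsLeast G.support β)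
    (hFG : IsLeast (F - G).support γ) : α ≤ β ∨ β ≤ α := by
  rcases support_sub_subset F G hFG.1 with hγF | hγG
  · rw [support_sub_comm] at hFG
    exact .inl (le_of_mem_support_of_mem_lowerBounds_support_sub hF.2 hG.1 hγF hFG.2)
  · exact .inr (le_of_mem_support_of_mem_lowerBounds_support_sub hG.2 hF.1 hγG hFG.2)

end Support

section Divisibility

variable {Γ R : Type*} [AddCommMonoid Γ] [PartialOrder Γ] [IsOrderedCancelAddMonoid Γ]
  {α β γ : Γ}

theorem single_one_dvd_single [ExistsAddOfLE Γ] [Semiring R] (hαβ : α ≤ β) (r : R) :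
    single α (1 : R) ∣ single β r := by
  obtain ⟨δ, rfl⟩ := exists_add_of_le hαβ
  exact ⟨single δ r, by rw [single_mul_single, one_mul]⟩

theorem dvd_of_associated_single [ExistsAddOfLE Γ] [Semiring R] {F G : HahnSeries Γ R}
    (hF : Associated (single α 1) F) (hG : Associated (single β 1) G) (hαβ : α ≤ β) : F ∣ G :=
  hF.symm.dvd.trans ((single_one_dvd_single hαβ 1).trans hG.dvd)

variable [CanonicallyOrderedAdd Γ]

theorem zero_mem_support_of_isUnit [Semiring R] [Nontrivial R] {U : HahnSeries Γ R}
    (hU : IsUnit U) : 0 ∈ U.support := by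
  obtain ⟨V, hUV⟩ := hU.exists_right_inv
  have zero_mem : (0 : Γ) ∈ (U * V).support := by simp [hUV]
  obtain ⟨a, ha, b, -, hab⟩ := support_mul_subset zero_mem
  rwa [(add_eq_zero.mp hab).1] at ha

theorem isLeast_support_of_associated_single [Semiring R] [Nontrivial R] {F : HahnSeries Γ R}
    (hF : Associated (single α 1) F) : IsLeast F.support α := by
  obtain ⟨U, rfl⟩ := hF
  constructor
  · have coeff_eq := coeff_single_mul_add (r := 1) (x := U.val) (a := 0) (b := α)
    rw [zero_add, one_mul] at coeff_eq
    rw [mem_support, coeff_eq]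
    exact zero_mem_support_of_isUnit U.isUnit
  · intro δ hδ
    obtain ⟨a, ha, b, -, rfl⟩ := support_mul_subset hδ
    rw [eq_of_mem_support_single ha]
    exact le_self_add

theorem normal_sub_normal_dvd_general [Ring R] {F₁ F₂ : HahnSeries Γ R}
    (h₁ : Associated (single α 1) F₁) (h₂ : Associated (single β 1) F₂)
    (h₁₂ : IsLeast (F₁ - F₂).support γ) : F₁ ∣ F₂ ∨ F₂ ∣ F₁ := by
  have : Nontrivial R := nontrivial_of_ne _ _ h₁₂.1
  exact (le_or_le_of_isLeast_support_sub (isLeast_support_of_associated_single h₁)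
    (isLeast_support_of_associated_single h₂) h₁₂).imp
    (dvd_of_associated_single h₁ h₂) (dvd_of_associated_single h₂ h₁)

end Divisibility

theorem IsNormalSeries.exists_associated_single {m : ℕ} {F : HahnSeries (Fin m → ℝ≥0) ℝ}
    (hF : IsNormalSeries F) : ∃ α, Associated (single α 1) F := by
  obtain ⟨α, U, hU, rfl⟩ := hF
  exact ⟨α, hU.unit, rfl⟩

/-- If `F₁`, `F₂` and `F₁ − F₂` are all normal generalised power
series, then `F₁ ∣ F₂` or `F₂ ∣ F₁` in `ℝ⟦X*⟧`. -/
theorem normal_sub_normal_dvd (m : ℕ) (F₁ F₂ : HahnSeries (Fin m → ℝ≥0) ℝ)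
    (h₁ : IsNormalSeries F₁) (h₂ : IsNormalSeries F₂)
    (h₁₂ : IsNormalSeries (F₁ - F₂)) :
    F₁ ∣ F₂ ∨ F₂ ∣ F₁ := by
  obtain ⟨α, hα⟩ := h₁.exists_associated_single
  obtain ⟨β, hβ⟩ := h₂.exists_associated_single
  obtain ⟨γ, hγ⟩ := h₁₂.exists_associated_single
  exact normal_sub_normal_dvd_general hα hβ (isLeast_support_of_associated_single hγ)
end

section
/- Let m ∈ ℕ. The ring ℝ⟦X*⟧ of generalised power series in m variables is an integral domain: if F, G ∈ ℝ⟦X*⟧ are both nonzero, then F·G is nonzero. -/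
open scoped NNReal

/-!
The lexicographic order on exponents is linear, compatible with addition, and extends the
componentwise order. A partially well-ordered support therefore has a lexicographically least
element. If `a` and `b` are these least exponents for `F` and `G`, then `(a, b)` is the only pair of
exponents summing to `a + b`, so the coefficient of `F * G` there is the product of two nonzero
coefficients.
-/

section HahnSeries

variable {Γ Γ' R : Type*}

theorem exists_mem_support_forall_le_of_monotone [PartialOrder Γ] [LinearOrder Γ'] [Zero R]
    {f : Γ → Γ'} (hf : Monotone f) {F : HahnSeries Γ R} (hF : F ≠ 0) :
    ∃ a ∈ F.support, ∀ i ∈ F.support, f a ≤ f i := by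
  obtain ⟨a, ha, hmin⟩ := Set.IsPWO.exists_minimalFor f F.support
    (F.isPWO_support.image_of_monotone hf) (HahnSeries.support_nonempty_iff.2 hF)
  exact ⟨a, ha, fun i hi => (le_total (f a) (f i)).elim id (hmin hi)⟩

variable [AddCommMonoid Γ] [PartialOrder Γ] [IsOrderedCancelAddMonoid Γ]
  [NonUnitalNonAssocSemiring R]

theorem coeff_mul_add_of_unique_add {F G : HahnSeries Γ R} {a b : Γ}
    (hab : ∀ i ∈ F.support, ∀ j ∈ G.support, i + j = a + b → i = a ∧ j = b) :
    (F * G).coeff (a + b) = F.coeff a * G.coeff b := by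
  rw [HahnSeries.coeff_mul, Finset.sum_eq_single (a, b)]
  · rintro ⟨i, j⟩ hij hne
    obtain ⟨hi, hj, hsum⟩ := Finset.mem_antidiagonal.1 hij
    exact absurd (Prod.ext_iff.2 (hab i hi j hj hsum)) hne
  · intro hnotMem
    by_contra hcoeff
    exact hnotMem (Finset.mem_antidiagonal.2
      ⟨left_ne_zero_of_mul hcoeff, right_ne_zero_of_mul hcoeff, rfl⟩)

theorem noZeroDivisors_hahnSeries_of_injective_of_monotone [NoZeroDivisors R]
    [AddCommMonoid Γ'] [LinearOrder Γ'] [IsOrderedCancelAddMonoid Γ']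
    (f : Γ →+ Γ') (hinj : Function.Injective f) (hmono : Monotone f) :
    NoZeroDivisors (HahnSeries Γ R) where
  eq_zero_or_eq_zero_of_mul_eq_zero {F G} hFG := by
    by_contra! hne
    obtain ⟨a, ha, hamin⟩ := exists_mem_support_forall_le_of_monotone hmono hne.1
    obtain ⟨b, hb, hbmin⟩ := exists_mem_support_forall_le_of_monotone hmono hne.2
    have hunique : ∀ i ∈ F.support, ∀ j ∈ G.support, i + j = a + b → i = a ∧ j = b := by
      intro i hi j hj hsum
      have hfsum : f a + f b = f i + f j := by rw [← map_add, ← map_add, hsum]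
      obtain ⟨hai, hbj⟩ := (add_eq_add_iff_eq_and_eq (hamin i hi) (hbmin j hj)).1 hfsum
      exact ⟨hinj hai.symm, hinj hbj.symm⟩
    have hcoeff : F.coeff a * G.coeff b = 0 := by
      rw [← coeff_mul_add_of_unique_add hunique, hFG, HahnSeries.coeff_zero]
    exact mul_ne_zero ha hb hcoeff

end HahnSeries

theorem generalised_power_series_no_zero_divisors_general {ι R : Type*} {Γ : ι → Type*}
    [∀ i, AddCommMonoid (Γ i)] [∀ i, LinearOrder (Γ i)] [∀ i, IsOrderedCancelAddMonoid (Γ i)]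
    [NonUnitalNonAssocSemiring R] [NoZeroDivisors R]
    (F G : HahnSeries (∀ i, Γ i) R) (hF : F ≠ 0) (hG : G ≠ 0) : F * G ≠ 0 := by
  -- Any well-order on `ι` makes the lexicographic order linear.
  obtain ⟨_, _⟩ := exists_wellFoundedLT ι
  have : NoZeroDivisors (HahnSeries (∀ i, Γ i) R) :=
    noZeroDivisors_hahnSeries_of_injective_of_monotone (toLexAddEquiv (∀ i, Γ i)).toAddMonoidHom
      toLex.injective Pi.toLex_monotone
  exact mul_ne_zero hF hG

/-- The ring `ℝ⟦X*⟧` of generalised power series in `m` variables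
is an integral domain: the product of two nonzero series is nonzero. -/
theorem generalised_power_series_no_zero_divisors (m : ℕ)
    (F G : HahnSeries (Fin m → ℝ≥0) ℝ) (hF : F ≠ 0) (hG : G ≠ 0) :
    F * G ≠ 0 :=
  generalised_power_series_no_zero_divisors_general F G hF hG
end

section
/- Let m ∈ ℕ, let U ∈ ℝ⟦X*⟧ be a generalised power series in m variables with U(0) > 0, and let k ∈ ℕ with k ≥ 1. Then there exists V ∈ ℝ⟦X*⟧ with V(0) > 0 such that V^k = U. -/
open scoped NNReal

/-!
Put `x = U - U(0)`, whose exponents are all strictly positive. A partially well-ordered set of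
positive exponents generates a partially well-ordered monoid in which every element is a sum of
`n` generators for only finitely many `n`, so `f(x)` makes sense for every formal power series
`f` in one variable `T`, and `f ↦ f(x)` is a ring homomorphism. Hensel's lemma in the `T`-adically
complete ring of formal power series extends a `k`-th root of `U(0)` to a `k`-th root of
`U(0) + T`, and evaluating that root at `x` gives a `k`-th root of `U`.
-/

open Finset.HasAntidiagonal in
theorem finsum_eq_finsum_sum_antidiagonal {A M : Type*} [AddMonoid A] [Finset.HasAntidiagonal A]
    [AddCommMonoid M] {F : A × A → M} (hF : F.support.Finite) :
    ∑ᶠ p, F p = ∑ᶠ n, ∑ p ∈ antidiagonal n, F p := by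
  classical
  have sum_support_subset : (fun n ↦ ∑ p ∈ antidiagonal n, F p).support ⊆
      (hF.toFinset.image fun p ↦ p.1 + p.2 : Finset A) := by
    intro n hn
    obtain ⟨p, hp, hFp⟩ := Finset.exists_ne_zero_of_sum_ne_zero hn
    exact Finset.mem_image.mpr ⟨p, hF.mem_toFinset.mpr hFp, mem_antidiagonal.mp hp⟩
  rw [finsum_eq_sum F hF, finsum_eq_sum_of_support_subset _ sum_support_subset,
    ← Finset.sum_fiberwise_of_maps_to fun _ ↦ Finset.mem_image_of_mem fun p : A × A ↦ p.1 + p.2]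
  refine Finset.sum_congr rfl fun n _ ↦ Finset.sum_subset ?_ ?_
  · exact fun p hp ↦ mem_antidiagonal.mpr (Finset.mem_filter.mp hp).2
  · intro p hp hp'
    by_contra hFp
    exact hp' (Finset.mem_filter.mpr ⟨hF.mem_toFinset.mpr hFp, mem_antidiagonal.mp hp⟩)

section PartialOrder

variable {Γ R : Type*} [AddCommMonoid Γ] [PartialOrder Γ]

/-- All exponents of `x` are strictly positive. On a linearly ordered `Γ` this is
`0 < x.orderTop`; on a partial order a Hahn series need not have a least exponent, so the
condition is imposed on the whole support. -/
def HasPosSupport [Zero R] (x : HahnSeries Γ R) : Prop :=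
  ∀ a ∈ x.support, 0 < a

namespace HasPosSupport

section Zero

variable [Zero R] {x : HahnSeries Γ R}

theorem coeff_zero (hx : HasPosSupport x) : x.coeff 0 = 0 := by
  by_contra h
  exact (hx 0 h).false

theorem isPWO_closure_support [IsOrderedCancelAddMonoid Γ] (hx : HasPosSupport x) :
    (AddSubmonoid.closure x.support : Set Γ).IsPWO :=
  x.isPWO_support.addSubmonoid_closure fun a ha ↦ (hx a ha).le

end Zero

variable [IsOrderedCancelAddMonoid Γ]

section Semiring

variable [Semiring R] {x y : HahnSeries Γ R}

theorem mul (hx : HasPosSupport x) (hy : HasPosSupport y) : HasPosSupport (x * y) := by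
  intro a ha
  obtain ⟨b, hb, c, hc, rfl⟩ := HahnSeries.support_mul_subset ha
  exact add_pos (hx b hb) (hy c hc)

theorem pow (hx : HasPosSupport x) {n : ℕ} (hn : n ≠ 0) : HasPosSupport (x ^ n) := by
  induction n, Nat.one_le_iff_ne_zero.mpr hn using Nat.le_induction with
  | base => simpa using hx
  | succ n hn ih => exact pow_succ x n ▸ (ih (by lia)).mul hx

theorem finite_setOf_coeff_pow_ne_zero (hx : HasPosSupport x) (a : Γ) :
    {n | (x ^ n).coeff a ≠ 0}.Finite := by
  by_cases ha : a ∈ AddSubmonoid.closure x.support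
  swap
  · exact Set.finite_empty.subset fun n hn ↦
      ha (HahnSeries.SummableFamily.support_pow_subset_closure x n hn)
  refine hx.isPWO_closure_support.isWF.induction
    (P := fun a ↦ {n | (x ^ n).coeff a ≠ 0}.Finite) ha fun a _ ih ↦ ?_
  let splittings := Finset.antidiagonal hx.isPWO_closure_support x.isPWO_support a
  have finite_succ : (⋃ p ∈ splittings, Nat.succ '' {n | (x ^ n).coeff p.1 ≠ 0}).Finite := by
    refine splittings.finite_toSet.biUnion fun p hp ↦ (ih p.1 ?_ ?_).image _
    all_goals obtain ⟨hp₁, hp₂, rfl⟩ := Finset.mem_antidiagonal.mp hp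
    · exact hp₁
    · exact lt_add_of_pos_right _ (hx _ hp₂)
  refine (finite_succ.insert 0).subset ?_
  rintro (_ | n) hn
  · exact Set.mem_insert 0 _
  · rw [Set.mem_ofPred_eq, pow_succ] at hn
    obtain ⟨b, hb, c, hc, rfl⟩ := HahnSeries.support_mul_subset hn
    have hb' := HahnSeries.SummableFamily.support_pow_subset_closure x n hb
    exact Or.inr (Set.mem_biUnion (x := (b, c)) (Finset.mem_antidiagonal.mpr ⟨hb', hc, rfl⟩)
      ⟨n, hb, rfl⟩)

/-- The powers of a series with positive exponents as a summable family, which makes infinite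
linear combinations of them meaningful. -/
noncomputable def powers (hx : HasPosSupport x) : HahnSeries.SummableFamily Γ R ℕ where
  toFun n := x ^ n
  isPWO_iUnion_support' := hx.isPWO_closure_support.mono <|
    Set.iUnion_subset (HahnSeries.SummableFamily.support_pow_subset_closure x)
  finite_co_support' := hx.finite_setOf_coeff_pow_ne_zero

end Semiring

section CommSemiring

variable [CommSemiring R] {x : HahnSeries Γ R}

/-- The family of terms `fₙ xⁿ` of the series obtained by substituting `x` into the formal power
series `f`. -/
noncomputable def evalFamily (hx : HasPosSupport x) (f : PowerSeries R) :
    HahnSeries.SummableFamily Γ R ℕ :=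
  .smulFamily (fun n ↦ f.coeff n) hx.powers

theorem evalFamily_apply (hx : HasPosSupport x) (f : PowerSeries R) (n : ℕ) :
    hx.evalFamily f n = f.coeff n • x ^ n :=
  rfl

theorem hsum_evalFamily_mul (hx : HasPosSupport x) (f g : PowerSeries R) :
    (hx.evalFamily (f * g)).hsum = (hx.evalFamily f).hsum * (hx.evalFamily g).hsum := by
  rw [← HahnSeries.SummableFamily.hsum_mul]
  ext a
  simp only [HahnSeries.SummableFamily.coeff_hsum]
  rw [finsum_eq_finsum_sum_antidiagonal
    (((hx.evalFamily f).mul (hx.evalFamily g)).finite_co_support a)]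
  refine finsum_congr fun n ↦ ?_
  rw [evalFamily_apply, PowerSeries.coeff_mul, HahnSeries.coeff_smul, Finset.sum_smul]
  refine Finset.sum_congr rfl fun p hp ↦ ?_
  rw [HahnSeries.SummableFamily.mul_toFun, evalFamily_apply, evalFamily_apply,
    smul_mul_smul_comm, ← pow_add, Finset.HasAntidiagonal.mem_antidiagonal.mp hp,
    HahnSeries.coeff_smul]

theorem hsum_evalFamily_monomial (hx : HasPosSupport x) (n : ℕ) (c : R) :
    (hx.evalFamily (PowerSeries.monomial n c)).hsum = c • x ^ n := by
  ext a
  rw [HahnSeries.SummableFamily.coeff_hsum, finsum_eq_single _ n fun i hi ↦ by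
    simp [evalFamily_apply, PowerSeries.coeff_monomial, hi]]
  simp [evalFamily_apply]

/-- Substitution `f ↦ f(x)` of a series with positive exponents into formal power series. This
extends `PowerSeries.heval` to partially ordered exponents. -/
noncomputable def eval (hx : HasPosSupport x) : PowerSeries R →+* HahnSeries Γ R where
  toFun f := (hx.evalFamily f).hsum
  map_zero' := by simpa using hx.hsum_evalFamily_monomial 0 0
  map_one' := by simpa using hx.hsum_evalFamily_monomial 0 1
  map_add' f g := by
    rw [← HahnSeries.SummableFamily.hsum_add]
    congr 1
    ext1 n
    simp [evalFamily_apply, add_smul]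
  map_mul' := hx.hsum_evalFamily_mul

theorem eval_apply (hx : HasPosSupport x) (f : PowerSeries R) :
    hx.eval f = (hx.evalFamily f).hsum :=
  rfl

theorem eval_C (hx : HasPosSupport x) (c : R) : hx.eval (PowerSeries.C c) = HahnSeries.C c := by
  rw [eval_apply, ← PowerSeries.monomial_zero_eq_C_apply, hsum_evalFamily_monomial, pow_zero,
    ← HahnSeries.C_mul_eq_smul, mul_one]

theorem eval_X (hx : HasPosSupport x) : hx.eval PowerSeries.X = x := by
  rw [eval_apply, PowerSeries.X_eq, hsum_evalFamily_monomial, pow_one, one_smul]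

theorem coeff_zero_eval (hx : HasPosSupport x) (f : PowerSeries R) :
    (hx.eval f).coeff 0 = f.constantCoeff := by
  rw [eval_apply, HahnSeries.SummableFamily.coeff_hsum, finsum_eq_single _ 0 fun n hn ↦ by
    rw [evalFamily_apply, HahnSeries.coeff_smul, (hx.pow hn).coeff_zero, smul_zero]]
  simp [evalFamily_apply]

end CommSemiring

end HasPosSupport

section CommRing

variable [CommRing R] {k : ℕ} {r : R}

theorem exists_powerSeries_pow_eq (hk : IsUnit (k : R)) (hr : IsUnit r) {f : PowerSeries R}
    (hf : r ^ k = f.constantCoeff) :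
    ∃ g : PowerSeries R, g.constantCoeff = r ∧ g ^ k = f := by
  nontriviality R
  have k_ne_zero : k ≠ 0 := by
    rintro rfl
    simp at hk
  let p : Polynomial (PowerSeries R) := .X ^ k - .C f
  have eval_mem : p.eval (.C r) ∈ Ideal.span {(PowerSeries.X : PowerSeries R)} := by
    simp [p, Ideal.mem_span_singleton, PowerSeries.X_dvd_iff, hf]
  have isUnit_derivative : IsUnit (p.derivative.eval (.C r)) := by
    simpa [p, Polynomial.derivative_X_pow] using
      (hk.map PowerSeries.C).mul ((hr.map PowerSeries.C).pow (k - 1))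
  obtain ⟨g, hg, hgr⟩ := HenselianRing.is_henselian p (Polynomial.monic_X_pow_sub_C f k_ne_zero)
    (.C r) eval_mem (isUnit_derivative.map _)
  refine ⟨g, ?_, ?_⟩
  · simpa [Ideal.mem_span_singleton, PowerSeries.X_dvd_iff, sub_eq_zero] using hgr
  · simpa [p, sub_eq_zero] using hg

theorem hasPosSupport_sub_C_coeff_zero [IsOrderedCancelAddMonoid Γ] {x : HahnSeries Γ R}
    (hx : ∀ a ∈ x.support, 0 ≤ a) :
    HasPosSupport (x - HahnSeries.C (x.coeff 0)) := by
  intro a ha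
  rcases eq_or_ne a 0 with rfl | a_ne_zero
  · simp at ha
  · exact (hx a (by simpa [HahnSeries.coeff_single_of_ne a_ne_zero] using ha)).lt_of_ne'
      a_ne_zero

theorem exists_kth_root_general [IsOrderedCancelAddMonoid Γ] (hk : IsUnit (k : R))
    (hr : IsUnit r) {U : HahnSeries Γ R} (hU : ∀ a ∈ U.support, 0 ≤ a)
    (hrU : r ^ k = U.coeff 0) :
    ∃ V : HahnSeries Γ R, V.coeff 0 = r ∧ V ^ k = U := by
  obtain ⟨g, hg, hgk⟩ := exists_powerSeries_pow_eq hk hr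
    (f := PowerSeries.C (U.coeff 0) + PowerSeries.X) (by simpa using hrU)
  have hx := hasPosSupport_sub_C_coeff_zero hU
  refine ⟨hx.eval g, (hx.coeff_zero_eval g).trans hg, ?_⟩
  rw [← map_pow, hgk, map_add, hx.eval_C, hx.eval_X, add_sub_cancel]

end CommRing

end PartialOrder

/-- If `U ∈ ℝ⟦X*⟧` has positive constant coefficient `U(0) > 0`
and `k ≥ 1`, then there is `V ∈ ℝ⟦X*⟧` with `V(0) > 0` and `V^k = U`. -/
theorem exists_kth_root (m k : ℕ) (hk : 1 ≤ k)
    (U : HahnSeries (Fin m → ℝ≥0) ℝ) (hU : 0 < U.coeff 0) :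
    ∃ V : HahnSeries (Fin m → ℝ≥0) ℝ, 0 < V.coeff 0 ∧ V ^ k = U := by
  have k_ne_zero : k ≠ 0 := Nat.one_le_iff_ne_zero.mp hk
  have root_pos : 0 < U.coeff 0 ^ (k⁻¹ : ℝ) := Real.rpow_pos_of_pos hU _
  obtain ⟨V, hV, hVk⟩ := exists_kth_root_general (Nat.cast_ne_zero.mpr k_ne_zero).isUnit
    root_pos.ne'.isUnit (fun _ _ ↦ zero_le) (Real.rpow_inv_natCast_pow hU.le k_ne_zero)
  exact ⟨V, hV ▸ root_pos, hVk⟩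
end

section
/- Let q ≥ 1, let β₁ < β₂ < … < β_q be pairwise distinct elements of [0,∞), let λ > 0 be a real number, let M be a real vector space, and let c₁, …, c_q ∈ M. If for every k ∈ ℕ one has Σ_{i=1}^q (λ^{β_i} · C(β_i, k)) • c_i = 0 in M, then c₁ = … = c_q = 0. -/
open scoped NNReal

/-- The generalised binomial coefficient `C(β,k) = β(β−1)⋯(β−k+1)/k!`
(with `C(β,0) = 1`). -/
noncomputable def genBinom (β : ℝ) (k : ℕ) : ℝ :=
  (∏ i ∈ Finset.range k, (β - i)) / (k.factorial : ℝ)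

/-!
For fixed nodes `v i` and vectors `c i`, the sum `∑ i, p(v i) • c i` is linear in the polynomial
`p`. As a function of `β`, the binomial coefficient `C(β, k)` is a polynomial of degree exactly
`k`, so if the sum vanishes on the first `n` of these polynomials, where `n` is the number of nodes,
then it vanishes on every polynomial of degree `< n`. When the nodes are distinct, the Lagrange
basis polynomials are among these, and the sum at the `i`-th one is `c i`. The factors `λ ^ β i` are
nonzero and are absorbed into the vectors.
-/

open Polynomial

section EvalSum

variable {ι R M : Type*} [Fintype ι] [CommSemiring R] [AddCommMonoid M] [Module R M]

/-- The `M`-valued linear functional `p ↦ ∑ i, p(v i) • c i` on polynomials: evaluation against the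
finite combination of point masses with coefficient `c i` at the node `v i`. -/
noncomputable def evalSum (v : ι → R) (c : ι → M) : R[X] →ₗ[R] M :=
  ∑ i, (leval (v i)).smulRight (c i)

theorem evalSum_apply (v : ι → R) (c : ι → M) (p : R[X]) :
    evalSum v c p = ∑ i, p.eval (v i) • c i := by
  simp [evalSum]

end EvalSum

section Interpolation

variable {ι K M : Type*} [Fintype ι] [Field K] [AddCommGroup M] [Module K M]
  {v : ι → K} {c : ι → M}

theorem evalSum_lagrange_basis [DecidableEq ι] (hv : Function.Injective v) (c : ι → M) (i : ι) :
    evalSum v c (Lagrange.basis Finset.univ v i) = c i := by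
  rw [evalSum_apply, Finset.sum_eq_single_of_mem i (Finset.mem_univ i),
    Lagrange.eval_basis_self hv.injOn (Finset.mem_univ i), one_smul]
  intro j _ hji
  rw [Lagrange.eval_basis_of_ne hji.symm (Finset.mem_univ j), zero_smul]

theorem eq_zero_of_degreeLT_le_ker_evalSum (hv : Function.Injective v)
    (h : degreeLT K (Fintype.card ι) ≤ (evalSum v c).ker) (i : ι) : c i = 0 := by
  classical
  have hdeg : Lagrange.basis Finset.univ v i ∈ degreeLT K (Fintype.card ι) := by
    rw [mem_degreeLT, Lagrange.degree_basis hv.injOn (Finset.mem_univ i), Finset.card_univ,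
      Nat.cast_lt]
    exact Nat.sub_one_lt_of_lt (Fintype.card_pos_iff.mpr ⟨i⟩)
  rw [← evalSum_lagrange_basis hv c i]
  exact h hdeg

theorem eq_zero_of_evalSum_sequence_eq_zero (S : Polynomial.Sequence K)
    (hv : Function.Injective v) (h : ∀ k < Fintype.card ι, evalSum v c (S k) = 0) (i : ι) :
    c i = 0 := by
  refine eq_zero_of_degreeLT_le_ker_evalSum hv ?_ i
  rw [← S.span_degreeLT fun k _ ↦ (leadingCoeff_ne_zero.mpr (S.ne_zero k)).isUnit,
    Submodule.span_le]
  rintro _ ⟨k, hk, rfl⟩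
  exact h k hk

end Interpolation

/-- The binomial coefficients `X (X - 1) ⋯ (X - k + 1) / k!` as a sequence of polynomials, the
`k`-th of degree `k`. -/
noncomputable def binomialSequence (K : Type*) [Field K] [CharZero K] : Polynomial.Sequence K where
  elems' k := C (k.factorial : K)⁻¹ * descPochhammer K k
  degree_eq' k := by
    have hk : (k.factorial : K)⁻¹ ≠ 0 := inv_ne_zero (Nat.cast_ne_zero.mpr k.factorial_ne_zero)
    rw [degree_C_mul hk, degree_eq_natDegree (monic_descPochhammer K k).ne_zero,
      descPochhammer_natDegree]

theorem eval_binomialSequence (β : ℝ) (k : ℕ) :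
    (binomialSequence ℝ k).eval β = genBinom β k := by
  simp only [binomialSequence, eval_mul, eval_C, descPochhammer_eval_eq_prod_range, genBinom,
    div_eq_inv_mul]

theorem binomial_linear_independence_general {ι M : Type*} [Fintype ι] [AddCommGroup M]
    [Module ℝ M] {β w : ι → ℝ} (hβ : Function.Injective β) (hw : ∀ i, w i ≠ 0) {c : ι → M}
    (h : ∀ k < Fintype.card ι, ∑ i, (w i * genBinom (β i) k) • c i = 0) (i : ι) :
    c i = 0 := by
  have hweighted : ∀ k < Fintype.card ι,
      evalSum β (fun i ↦ w i • c i) (binomialSequence ℝ k) = 0 := by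
    intro k hk
    simpa only [evalSum_apply, eval_binomialSequence, smul_smul, mul_comm] using h k hk
  exact (smul_eq_zero_iff_right (hw i)).mp
    (eq_zero_of_evalSum_sequence_eq_zero (binomialSequence ℝ) hβ hweighted i)

/-- Let `β₁ < … < β_q` be distinct elements of `[0,∞)` (`q ≥ 1`),
`λ > 0`, `M` a real vector space and `c₁, …, c_q ∈ M`.  If
`Σ_{i=1}^q (λ^{β_i} · C(β_i,k)) • c_i = 0` for every `k ∈ ℕ`, then all `c_i = 0`. -/
theorem binomial_linear_independence (q : ℕ) (hq : 1 ≤ q)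
    (β : Fin q → ℝ) (hβ0 : ∀ i, 0 ≤ β i) (hβ : StrictMono β)
    (lam : ℝ) (hlam : 0 < lam)
    (M : Type*) [AddCommGroup M] [Module ℝ M] (c : Fin q → M)
    (h : ∀ k : ℕ, ∑ i, (lam ^ (β i) * genBinom (β i) k) • c i = 0) :
    ∀ i, c i = 0 :=
  binomial_linear_independence_general hβ.injective
    (fun i ↦ (Real.rpow_pos_of_pos hlam (β i)).ne') fun k _ ↦ h k
end

section
/- Let q ≥ 1 and let β₁, …, β_q be pairwise distinct elements of [0,∞). Then there exist natural numbers j₁ < j₂ < … < j_q such that the q × q real matrix with entries C(β_i, j_s), 1 ≤ i, s ≤ q, has nonzero determinant. -/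
/-!
The indices `0, 1, …, q - 1` always work: `C(x, s)` is a polynomial in `x` of degree `s` with
leading coefficient `1 / s!`, so column operations turn the matrix `C(β_i, s)` into the Vandermonde
matrix of `β` with its columns scaled by `1 / s!`.
-/

open Matrix Polynomial
open scoped Nat

section CommRing

variable {R : Type*} [CommRing R] {n : ℕ}

theorem det_eval_descPochhammer (v : Fin n → R) :
    (of fun i s : Fin n => (descPochhammer R s).eval (v i)).det = (vandermonde v).det := by
  nontriviality R
  have map_eq (s : Fin n) : (descPochhammer ℤ s).map (Int.castRingHom R) = descPochhammer R s :=
    descPochhammer_map _ s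
  have monic (s : Fin n) : (descPochhammer R s).Monic :=
    map_eq s ▸ (monic_descPochhammer ℤ s).map _
  have natDegree_eq (s : Fin n) : (descPochhammer R s).natDegree = s := by
    rw [← map_eq, (monic_descPochhammer ℤ s).natDegree_map, descPochhammer_natDegree]
  exact (det_eval_matrixOfPolynomials_eq_det_vandermonde v _ natDegree_eq monic).symm

variable [BinomialRing R]

theorem eval_descPochhammer_eq_factorial_mul_choose (r : R) (k : ℕ) :
    (descPochhammer R k).eval r = k ! * Ring.choose r k := by
  rw [← descPochhammer_map (algebraMap ℤ R), eval_map_algebraMap, aeval_eq_smeval,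
    Ring.descPochhammer_eq_factorial_smul_choose, nsmul_eq_mul]

theorem prod_factorial_nsmul_det_choose (v : Fin n → R) :
    (∏ s : Fin n, (s : ℕ)!) • (of fun i s : Fin n => Ring.choose (v i) s).det =
      (vandermonde v).det := by
  rw [← det_eval_descPochhammer, nsmul_eq_mul, Nat.cast_prod, ← det_mul_row]
  simp only [of_apply, eval_descPochhammer_eq_factorial_mul_choose]

theorem exists_nonzero_binomial_determinant_general [IsDomain R] {v : Fin n → R} :
    (of fun i s : Fin n => Ring.choose (v i) s).det ≠ 0 ↔ Function.Injective v := by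
  have := BinomialRing.toIsAddTorsionFree (R := R)
  have prod_factorial_ne_zero : ∏ s : Fin n, (s : ℕ)! ≠ 0 :=
    Finset.prod_ne_zero_iff.mpr fun s _ => Nat.factorial_ne_zero s
  rw [← det_vandermonde_ne_zero_iff, ← prod_factorial_nsmul_det_choose,
    ne_eq, ne_eq, nsmul_eq_zero_iff_right prod_factorial_ne_zero]

end CommRing

theorem genBinom_eq_choose (β : ℝ) (k : ℕ) : genBinom β k = Ring.choose β k := by
  rw [genBinom, ← descPochhammer_eval_eq_prod_range, eval_descPochhammer_eq_factorial_mul_choose,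
    mul_div_cancel_left₀ _ (Nat.cast_ne_zero.mpr k.factorial_ne_zero)]

/-- Given pairwise distinct `β₁, …, β_q ∈ [0,∞)` (`q ≥ 1`), there
exist natural numbers `j₁ < … < j_q` such that the `q × q` matrix with entries
`C(β_i, j_s)` has nonzero determinant. -/
theorem exists_nonzero_binomial_determinant (q : ℕ) (hq : 1 ≤ q)
    (β : Fin q → ℝ) (hβ0 : ∀ i, 0 ≤ β i) (hβ : Function.Injective β) :
    ∃ j : Fin q → ℕ, StrictMono j ∧
      (Matrix.of fun i s : Fin q => genBinom (β i) (j s)).det ≠ 0 := by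
  simp only [genBinom_eq_choose]
  exact ⟨Fin.val, Fin.val_strictMono, exists_nonzero_binomial_determinant_general.mpr hβ⟩
end

section
/- Let m, n ∈ ℕ with n ≥ 1, write V = Y_n, and let F, G ∈ ℝ⟦Z*, Y⟧ be mixed generalised power series such that G is regular of order d ∈ ℕ in the variable V, i.e. the coefficient of G at the exponent (0, 0, k) vanishes for every k < d and is nonzero for k = d. Then there exist Q ∈ ℝ⟦Z*, Y⟧ and B₀, …, B_{d−1} ∈ ℝ⟦Z*, Y⟧ whose supports have last (V-)coordinate equal to 0, such that F = G·Q + Σ_{i=0}^{d−1} B_i · V^i, and moreover Supp_Z(Q) and each Supp_Z(B_i) are contained in the additive submonoid of [0,∞)^m generated by Supp_Z(F) ∪ Supp_Z(G) (the set of all finite componentwise sums of elements of Supp_Z(F) ∪ Supp_Z(G), together with 0). -/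
open scoped NNReal

/-- The ring `ℝ⟦Z*, Y⟧` of mixed generalised power series in
`Z = (Z₁,…,Z_m)` (exponents in `[0,∞)`) and `Y = (Y₁,…,Y_{n+1})`
(exponents in `ℕ`). -/
abbrev MixedSeries (m n : ℕ) :=
  HahnSeries ((Fin m → ℝ≥0) × (Fin (n + 1) → ℕ)) ℝ

/-- The exponent `(0, 0, k)`: `Z`-exponent `0`, `Y₁,…,Y_n`-exponent `0`
and `Y_{n+1} = V`-exponent `k`. -/
def vExp (m n : ℕ) (k : ℕ) : (Fin m → ℝ≥0) × (Fin (n + 1) → ℕ) :=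
  (0, Pi.single (Fin.last n) k)

/-- The `Z`-support of a mixed series: the projection of its support to the
`Z`-exponents. -/
def suppZ {m n : ℕ} (H : MixedSeries m n) : Set (Fin m → ℝ≥0) :=
  Prod.fst '' H.support

/-!
Write `V` for the distinguished variable. The remainder `F - G * Q` must have `V`-degree less than
`d`, so `Q` has to satisfy `(G * Q).coeff (q + V^d) = F.coeff (q + V^d)` for all exponents `q`. The
term of the left side containing `Q.coeff q` has the unit `G.coeff V^d` as its factor. Any other
term involves `Q.coeff b` with `a + b = q + V^d` for some `a` in the support of `G`. Either `b` is
smaller than `q` away from `V`, or `a` is a power of `V`, at least `V^d` by regularity, and then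
`b` has smaller `V`-degree than `q`. Hence the system is triangular for the lexicographic order
comparing the other exponents first and the `V`-degree second. This order is well-founded on the
exponents whose `Z`-part lies in the submonoid generated by the `Z`-supports of `F` and `G`, since
that submonoid is partially well-ordered (Neumann's lemma); the solution `Q` and the remainder
never leave it.
-/

section TriangularSystem

theorem exists_mul_add_sum_eq_of_wellFounded {R α κ : Type*} [Ring R] {r : α → α → Prop}
    (hr : WellFounded r) (u : Rˣ) (f : α → R) (s : α → Finset κ) (a : κ → R) (t : κ → α)
    (hs : ∀ q, ∀ x ∈ s q, r (t x) q) :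
    ∃ c : α → R, ∀ q, u * c q + ∑ x ∈ s q, a x * c (t x) = f q := by
  let solve (q : α) (c : ∀ b, r b q → R) : R :=
    ↑u⁻¹ * (f q - ∑ x ∈ (s q).attach, a x * c (t x) (hs q x x.2))
  refine ⟨hr.fix solve, fun q ↦ ?_⟩
  rw [hr.fix_eq, Units.mul_inv_cancel_left,
    Finset.sum_attach (s q) fun x ↦ a x * hr.fix solve (t x), sub_add_cancel]

variable {E R : Type*} [AddCommMonoid E] [PartialOrder E] [IsOrderedCancelAddMonoid E]

theorem support_mul_subset_addSubmonoid [NonUnitalNonAssocSemiring R] {M : AddSubmonoid E}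
    {F G : HahnSeries E R} (hF : F.support ⊆ M) (hG : G.support ⊆ M) : (F * G).support ⊆ M :=
  HahnSeries.support_mul_subset.trans (AddSubmonoid.add_subset hF hG)

theorem coeff_mul_add_eq_mul_add_sum_erase [NonUnitalNonAssocSemiring R] [DecidableEq E]
    (G : HahnSeries E R) {Q : HahnSeries E R} {T : Set E} (hT : T.IsPWO) (hQ : Q.support ⊆ T)
    (e q : E) :
    (G * Q).coeff (q + e) = G.coeff e * Q.coeff q +
      ∑ x ∈ (Finset.antidiagonal G.isPWO_support hT (q + e)).erase (e, q),
        G.coeff x.1 * Q.coeff x.2 := by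
  rw [HahnSeries.coeff_mul_right' hT hQ]
  by_cases hmem : (e, q) ∈ Finset.antidiagonal G.isPWO_support hT (q + e)
  · exact (Finset.add_sum_erase _ (fun x ↦ G.coeff x.1 * Q.coeff x.2) hmem).symm
  · have leading_eq_zero : G.coeff e * Q.coeff q = 0 := by
      by_contra h
      exact hmem (Finset.mem_antidiagonal.2
        ⟨left_ne_zero_of_mul h, hQ (right_ne_zero_of_mul h), add_comm e q⟩)
    rw [leading_eq_zero, zero_add, Finset.erase_eq_of_notMem hmem]

theorem exists_coeff_mul_add_eq [Ring R] {M : AddSubmonoid E} (hM : (M : Set E).IsPWO)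
    {F G : HahnSeries E R} (hF : F.support ⊆ M) (hG : G.support ⊆ M) {e : E}
    (he : IsUnit (G.coeff e)) (hMe : ∀ q, q + e ∈ M → q ∈ M)
    (hwf : (M : Set E).WellFoundedOn fun b q ↦ b ≠ q ∧ ∃ a ∈ G.support, a + b = q + e) :
    ∃ Q : HahnSeries E R, Q.support ⊆ M ∧
      ∀ q, (G * Q).coeff (q + e) = F.coeff (q + e) := by
  classical
  let pairs (q : E) : Finset (E × E) :=
    (Finset.antidiagonal G.isPWO_support hM (q + e)).erase (e, q)
  have pred_of_mem_pairs (q : E) (x : E × E) (hx : x ∈ pairs q) :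
      (x.2 ≠ q ∧ ∃ a ∈ G.support, a + x.2 = q + e) ∧ x.2 ∈ M ∧ q ∈ M := by
    obtain ⟨hne, hx⟩ := Finset.mem_erase.1 hx
    obtain ⟨hx₁, hx₂, hsum⟩ := Finset.mem_antidiagonal.1 hx
    refine ⟨⟨fun h ↦ hne (Prod.ext ?_ h), x.1, hx₁, hsum⟩, hx₂,
      hMe q (hsum ▸ M.add_mem (hG hx₁) hx₂)⟩
    exact add_right_cancel (hsum.trans (h ▸ add_comm q e))
  obtain ⟨c, hc⟩ := exists_mul_add_sum_eq_of_wellFounded (Set.wellFoundedOn_iff.1 hwf)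
    he.unit (fun q ↦ F.coeff (q + e)) pairs (fun x ↦ G.coeff x.1) Prod.snd pred_of_mem_pairs
  have support_c : Function.support c ⊆ M := fun q hcq ↦ by
    by_contra hq
    have no_pairs : pairs q = ∅ :=
      Finset.eq_empty_of_forall_notMem fun x hx ↦ hq (pred_of_mem_pairs q x hx).2.2
    have hFq : F.coeff (q + e) = 0 := by_contra fun h ↦ hq (hMe q (hF h))
    have hq_eq : he.unit * c q = 0 := by
      simpa only [no_pairs, Finset.sum_empty, add_zero, hFq] using hc q
    exact hcq ((Units.mul_right_eq_zero _).1 hq_eq)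
  let Q : HahnSeries E R := ⟨c, hM.mono support_c⟩
  exact ⟨Q, support_c, fun q ↦
    (coeff_mul_add_eq_mul_add_sum_erase G hM (Q := Q) support_c e q).trans (hc q)⟩

end TriangularSystem

section MixedExponents

theorem isPWO_preimage_fst {α β : Type*} [Preorder α] [Preorder β] [WellQuasiOrderedLE β]
    {S : Set α} (hS : S.IsPWO) : (Prod.fst ⁻¹' S : Set (α × β)).IsPWO :=
  Set.prod_univ ▸ hS.prod (Set.isPWO_of_wellQuasiOrderedLE Set.univ)

variable {Γ ι : Type*} [AddCommMonoid Γ] [DecidableEq ι]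

/-- The exponent of the monomial `V ^ k`, where `V` is the natural-exponent variable indexed
by `v`. -/
def varExp (v : ι) (k : ℕ) : Γ × (ι → ℕ) := (0, Pi.single v k)

/-- The exponent of the monomial obtained from a given one by setting the variable indexed by `v`
to `1`. -/
def eraseVar (v : ι) : Γ × (ι → ℕ) →+ Γ × (ι → ℕ) where
  toFun p := (p.1, Function.update p.2 v 0)
  map_zero' := by simp
  map_add' p q := by simp [← Function.update_add]

theorem varExp_zero (v : ι) : varExp v 0 = (0 : Γ × (ι → ℕ)) := by
  simp [varExp]

theorem varExp_add (v : ι) (j k : ℕ) :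
    (varExp v (j + k) : Γ × (ι → ℕ)) = varExp v j + varExp v k := by
  simp [varExp, Pi.single_add]

theorem add_varExp_fst (v : ι) (k : ℕ) (p : Γ × (ι → ℕ)) : (p + varExp v k).1 = p.1 := by
  simp [varExp]

theorem add_varExp_snd_self (v : ι) (k : ℕ) (p : Γ × (ι → ℕ)) :
    (p + varExp v k).2 v = p.2 v + k := by
  simp [varExp]

theorem eraseVar_varExp (v : ι) (k : ℕ) : eraseVar v (varExp v k : Γ × (ι → ℕ)) = 0 := by
  simp [eraseVar, varExp, Pi.single, Function.update_idem]

theorem eraseVar_snd_self (v : ι) (p : Γ × (ι → ℕ)) : (eraseVar v p).2 v = 0 := by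
  simp [eraseVar]

theorem eraseVar_add_varExp (v : ι) (p : Γ × (ι → ℕ)) :
    eraseVar v p + varExp v (p.2 v) = p := by
  refine Prod.ext (add_zero _) (funext fun i ↦ ?_)
  obtain rfl | hi := eq_or_ne i v <;> simp [eraseVar, varExp, *]

theorem exists_add_varExp_eq (v : ι) {k : ℕ} {p : Γ × (ι → ℕ)} (hk : k ≤ p.2 v) :
    ∃ q, q + varExp v k = p :=
  ⟨eraseVar v p + varExp v (p.2 v - k), by
    rw [add_assoc, ← varExp_add, Nat.sub_add_cancel hk, eraseVar_add_varExp]⟩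

theorem eraseVar_monotone [Preorder Γ] (v : ι) :
    Monotone (eraseVar v : Γ × (ι → ℕ) →+ Γ × (ι → ℕ)) :=
  fun _ _ h ↦ ⟨h.1, update_le_update_iff.2 ⟨le_rfl, fun i _ ↦ h.2 i⟩⟩

variable [PartialOrder Γ] {R : Type*}

section VarCoeff

/-- The coefficient of `V ^ i` in `H`, where `V` is the variable indexed by `v`, as a series not
involving `V`. It stays in the ring of `H`, with exponent `0` in the coordinate `v`. -/
def varCoeff [Zero R] (v : ι) (i : ℕ) (H : HahnSeries (Γ × (ι → ℕ)) R) :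
    HahnSeries (Γ × (ι → ℕ)) R where
  coeff p := if p.2 v = 0 then H.coeff (p + varExp v i) else 0
  isPWO_support' := by
    refine (H.isPWO_support.image_of_monotone (eraseVar_monotone v)).mono fun p hp ↦ ?_
    obtain ⟨hp₀, hpH⟩ := ite_ne_right_iff.1 hp
    refine ⟨p + varExp v i, hpH, ?_⟩
    rw [map_add, eraseVar_varExp, add_zero]
    simpa [hp₀, varExp_zero] using eraseVar_add_varExp v p

theorem mem_support_varCoeff [Zero R] {v : ι} {i : ℕ} {H : HahnSeries (Γ × (ι → ℕ)) R}
    {p : Γ × (ι → ℕ)} :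
    p ∈ (varCoeff v i H).support ↔ p.2 v = 0 ∧ p + varExp v i ∈ H.support :=
  ite_ne_right_iff

variable [IsOrderedCancelAddMonoid Γ] [NonAssocSemiring R]

theorem coeff_varCoeff_mul_single (v : ι) (i : ℕ) (H : HahnSeries (Γ × (ι → ℕ)) R)
    (p : Γ × (ι → ℕ)) :
    (varCoeff v i H * HahnSeries.single (varExp v i) 1).coeff p =
      if p.2 v = i then H.coeff p else 0 := by
  split_ifs with hp
  · have hp_eq : eraseVar v p + varExp v i = p := hp ▸ eraseVar_add_varExp v p
    rw [← hp_eq, HahnSeries.coeff_mul_single_add, mul_one]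
    exact if_pos (eraseVar_snd_self v p)
  · by_contra hne
    obtain ⟨a, ha, b, hb, rfl⟩ := HahnSeries.support_mul_subset hne
    obtain rfl := HahnSeries.eq_of_mem_support_single hb
    exact hp (by rw [add_varExp_snd_self, (mem_support_varCoeff.1 ha).1, zero_add])

theorem sum_varCoeff_mul_single {v : ι} {d : ℕ} {H : HahnSeries (Γ × (ι → ℕ)) R}
    (hH : ∀ p, d ≤ p.2 v → H.coeff p = 0) :
    ∑ i : Fin d, varCoeff v i H * HahnSeries.single (varExp v i) 1 = H := by
  ext p
  simp only [HahnSeries.coeff_sum, coeff_varCoeff_mul_single]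
  rw [Fin.sum_univ_eq_sum_range (fun i ↦ if p.2 v = i then H.coeff p else 0),
    Finset.sum_ite_eq, ite_eq_left_iff, Finset.mem_range, not_lt]
  exact fun hp ↦ (hH p hp).symm

end VarCoeff

variable [IsOrderedCancelAddMonoid Γ] [CanonicallyOrderedAdd Γ]

theorem eraseVar_lt_or_of_add_eq [Zero R] {v : ι} {d : ℕ} {G : HahnSeries (Γ × (ι → ℕ)) R}
    (hG : ∀ k < d, G.coeff (varExp v k) = 0) {a b q : Γ × (ι → ℕ)} (ha : a ∈ G.support)
    (hab : a + b = q + varExp v d) (hne : b ≠ q) :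
    eraseVar v b < eraseVar v q ∨ eraseVar v b = eraseVar v q ∧ b.2 v < q.2 v := by
  have erase_add : eraseVar v a + eraseVar v b = eraseVar v q := by
    rw [← map_add, hab, map_add, eraseVar_varExp, add_zero]
  have degree_add : a.2 v + b.2 v = q.2 v + d := by
    rw [← add_varExp_snd_self v d q, ← hab, Prod.snd_add, Pi.add_apply]
  refine (erase_add ▸ le_add_self : eraseVar v b ≤ eraseVar v q).lt_or_eq.imp_right
    fun heq ↦ ⟨heq, ?_⟩
  have ha_eq : varExp v (a.2 v) = a := by
    have erase_a : eraseVar v a = 0 := add_eq_right.1 (erase_add.trans heq.symm)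
    simpa [erase_a] using eraseVar_add_varExp v a
  have hd : d ≤ a.2 v := by
    by_contra! hlt
    exact ha (ha_eq ▸ hG _ hlt)
  have degree_ne : b.2 v ≠ q.2 v := fun h ↦
    hne (by rw [← eraseVar_add_varExp v b, heq, h, eraseVar_add_varExp])
  lia

open scoped Function in
theorem wellFoundedOn_ne_and_exists_add_eq_add_varExp [Finite ι] [Zero R] {v : ι} {d : ℕ}
    {G : HahnSeries (Γ × (ι → ℕ)) R} (hG : ∀ k < d, G.coeff (varExp v k) = 0)
    {S : Set Γ} (hS : S.IsPWO) :
    (Prod.fst ⁻¹' S).WellFoundedOn fun b q : Γ × (ι → ℕ) ↦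
      b ≠ q ∧ ∃ a ∈ G.support, a + b = q + varExp v d := by
  have lex_wellFounded : (Prod.fst ⁻¹' S).WellFoundedOn (Prod.Lex (· < ·) (· < ·) on
      fun p : Γ × (ι → ℕ) ↦ (eraseVar v p, p.2 v)) := by
    refine Set.WellFoundedOn.prod_lex_of_wellFoundedOn_fiber
      ((isPWO_preimage_fst hS).isWF.mapsTo (eraseVar v) fun _ hp ↦ hp) fun _ ↦ ?_
    exact (InvImage.wf (fun p : Γ × (ι → ℕ) ↦ p.2 v) wellFounded_lt).wellFoundedOn
  refine lex_wellFounded.mono ?_ subset_rfl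
  rintro b q ⟨hne, a, ha, hab⟩
  exact Prod.lex_iff.2 (eraseVar_lt_or_of_add_eq hG ha hab hne)

theorem formal_weierstrass_division_general [Finite ι] [Ring R] (v : ι)
    (F G : HahnSeries (Γ × (ι → ℕ)) R) (d : ℕ)
    (hreg₀ : ∀ k < d, G.coeff (varExp v k) = 0) (hreg₁ : IsUnit (G.coeff (varExp v d))) :
    ∃ (Q : HahnSeries (Γ × (ι → ℕ)) R) (B : Fin d → HahnSeries (Γ × (ι → ℕ)) R),
      (∀ i, ∀ p ∈ (B i).support, p.2 v = 0) ∧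
      F = G * Q + ∑ i : Fin d, B i * HahnSeries.single (varExp v i) 1 ∧
      Prod.fst '' Q.support ⊆
        ↑(AddSubmonoid.closure (Prod.fst '' F.support ∪ Prod.fst '' G.support)) ∧
      ∀ i, Prod.fst '' (B i).support ⊆
        ↑(AddSubmonoid.closure (Prod.fst '' F.support ∪ Prod.fst '' G.support)) := by
  set S := AddSubmonoid.closure (Prod.fst '' F.support ∪ Prod.fst '' G.support)
  have hS : (S : Set Γ).IsPWO := Set.IsPWO.addSubmonoid_closure (fun _ _ ↦ zero_le)
    ((F.isPWO_support.image_of_monotone monotone_fst).union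
      (G.isPWO_support.image_of_monotone monotone_fst))
  let M : AddSubmonoid (Γ × (ι → ℕ)) := S.comap (AddMonoidHom.fst Γ (ι → ℕ))
  have hF : F.support ⊆ M := fun p hp ↦ AddSubmonoid.subset_closure (.inl ⟨p, hp, rfl⟩)
  have hG : G.support ⊆ M := fun p hp ↦ AddSubmonoid.subset_closure (.inr ⟨p, hp, rfl⟩)
  have hMv (i : ℕ) (q : Γ × (ι → ℕ)) (hq : q + varExp v i ∈ M) : q ∈ M :=
    (congrArg (· ∈ S) (add_varExp_fst v i q)).mp hq
  obtain ⟨Q, hQ, hGQ⟩ := exists_coeff_mul_add_eq (isPWO_preimage_fst hS) hF hG hreg₁ (hMv d)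
    (wellFoundedOn_ne_and_exists_add_eq_add_varExp hreg₀ hS)
  have hR : (F - G * Q).support ⊆ M := (HahnSeries.support_sub_subset _ _).trans
    (Set.union_subset hF (support_mul_subset_addSubmonoid hG hQ))
  have hR_degree (p : Γ × (ι → ℕ)) (hp : d ≤ p.2 v) : (F - G * Q).coeff p = 0 := by
    obtain ⟨q, rfl⟩ := exists_add_varExp_eq v hp
    rw [HahnSeries.coeff_sub, hGQ, sub_self]
  refine ⟨Q, fun i ↦ varCoeff v i (F - G * Q), fun i p hp ↦ (mem_support_varCoeff.1 hp).1, ?_,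
    Set.image_subset_iff.2 hQ, fun i ↦ Set.image_subset_iff.2 fun p hp ↦
      hMv i p (hR (mem_support_varCoeff.1 hp).2)⟩
  rw [sum_varCoeff_mul_single hR_degree, add_sub_cancel]

end MixedExponents

/-- formal Weierstrass division: if `G ∈ ℝ⟦Z*, Y⟧` is regular of
order `d` in the last variable `V = Y_{n+1}`, then every `F ∈ ℝ⟦Z*, Y⟧` can be
written as `F = G·Q + Σ_{i<d} B_i·V^i` with the `B_i` not involving `V`, and
with `Supp_Z(Q)` and the `Supp_Z(B_i)` contained in the additive submonoid of
`[0,∞)^m` generated by `Supp_Z(F) ∪ Supp_Z(G)`. -/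
theorem formal_weierstrass_division (m n : ℕ) (F G : MixedSeries m n) (d : ℕ)
    (hreg₀ : ∀ k < d, G.coeff (vExp m n k) = 0)
    (hreg₁ : G.coeff (vExp m n d) ≠ 0) :
    ∃ (Q : MixedSeries m n) (B : Fin d → MixedSeries m n),
      (∀ i, ∀ p ∈ (B i).support, p.2 (Fin.last n) = 0) ∧
      F = G * Q + ∑ i : Fin d, B i * HahnSeries.single (vExp m n (i : ℕ)) (1 : ℝ) ∧
      suppZ Q ⊆ ↑(AddSubmonoid.closure (suppZ F ∪ suppZ G)) ∧
      ∀ i, suppZ (B i) ⊆ ↑(AddSubmonoid.closure (suppZ F ∪ suppZ G)) :=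
  formal_weierstrass_division_general (Fin.last n) F G d hreg₀ hreg₁.isUnit
end

section
/- Let A be a commutative ring and let R be the ring of generalised power series in two variables u, v with coefficients in A, i.e. the Hahn series ring over the additive monoid [0,∞) × [0,∞) (with the componentwise order) with coefficients in A. For every F ∈ R, the coefficient function g : [0,∞)² → A defined by g(γ, δ) = (coefficient of F at (γ − δ, δ)) when δ ≤ γ and g(γ, δ) = 0 otherwise, has partially well-ordered support, hence defines an element T(F) ∈ R; equivalently, T is induced by the exponent reindexing (α, β) ↦ (α + β, β), so that T(u^α v^β) = u^{α+β} v^β. The resulting map T : R → R is an injective ring homomorphism. (T represents the substitution F(u, v) ↦ F(u, u·v) given by the blow-up chart π⁰ with λ = 0.) -/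
open scoped NNReal

/-- The coefficient function of the substitution `F(u,v) ↦ F(u, u·v)`
(blow-up chart `π⁰`, `λ = 0`): `g(γ,δ)` is the coefficient of `F` at
`(γ − δ, δ)` when `δ ≤ γ`, and `0` otherwise. -/
noncomputable def blowupZeroCoeff {A : Type*} [CommRing A]
    (F : HahnSeries (ℝ≥0 × ℝ≥0) A) (q : ℝ≥0 × ℝ≥0) : A :=
  if q.2 ≤ q.1 then F.coeff (q.1 - q.2, q.2) else 0

/-!
The exponent map `(α, β) ↦ (α + β, β)` is additive, injective and monotone. Monotonicity keeps
supports partially well-ordered; additivity and injectivity identify the pairs of exponents summing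
to `γ` with the pairs of image exponents summing to the image of `γ`, so reindexing commutes with
convolution. The map is not an order embedding (the incomparable `(1, 0)` and `(0, 1)` go to
`(1, 0) ≤ (1, 1)`), so `HahnSeries.embDomain` does not apply.
-/

section Reindex

variable {Γ Γ' A : Type*} [PartialOrder Γ] [PartialOrder Γ']

/-- The Hahn series `∑ x_γ t^{f γ}` obtained from `x = ∑ x_γ t^γ` by moving every exponent along a
monotone map `f`. It has this meaning for injective `f`; otherwise `Function.extend` picks the
coefficient of one arbitrary preimage. -/
noncomputable def reindex [Zero A] (f : Γ →o Γ') (x : HahnSeries Γ A) : HahnSeries Γ' A where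
  coeff := Function.extend f x.coeff 0
  isPWO_support' := (x.isPWO_support.image_of_monotone f.monotone).mono
    Function.support_extend_zero_subset

section Zero

variable [Zero A] {f : Γ →o Γ'}

lemma coeff_reindex_apply (hf : Function.Injective f) (x : HahnSeries Γ A) (γ : Γ) :
    (reindex f x).coeff (f γ) = x.coeff γ :=
  hf.extend_apply _ _ _

lemma coeff_reindex_of_notMem_range (x : HahnSeries Γ A) {γ' : Γ'} (hγ' : γ' ∉ Set.range f) :
    (reindex f x).coeff γ' = 0 :=
  Function.extend_apply' _ _ _ hγ'

lemma support_reindex (hf : Function.Injective f) (x : HahnSeries Γ A) :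
    (reindex f x).support = f '' x.support :=
  Function.support_extend_zero hf

lemma reindex_injective (hf : Function.Injective f) :
    Function.Injective (reindex f : HahnSeries Γ A → HahnSeries Γ' A) := by
  intro x y hxy
  ext γ
  rw [← coeff_reindex_apply hf x, hxy, coeff_reindex_apply hf y]

lemma reindex_zero (f : Γ →o Γ') : reindex f (0 : HahnSeries Γ A) = 0 :=
  HahnSeries.ext (Function.extend_zero f)

lemma reindex_single (hf : Function.Injective f) (γ : Γ) (a : A) :
    reindex f (HahnSeries.single γ a) = HahnSeries.single (f γ) a := by
  classical
  ext γ'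
  by_cases hγ' : γ' ∈ Set.range f
  · obtain ⟨δ, rfl⟩ := hγ'
    simp only [coeff_reindex_apply hf, HahnSeries.coeff_single, hf.eq_iff]
  · have hne : γ' ≠ f γ := fun h ↦ hγ' ⟨γ, h.symm⟩
    rw [coeff_reindex_of_notMem_range _ hγ', HahnSeries.coeff_single_of_ne hne]

end Zero

lemma reindex_add [AddMonoid A] (f : Γ →o Γ') (x y : HahnSeries Γ A) :
    reindex f (x + y) = reindex f x + reindex f y := by
  have hextend := Function.extend_add f x.coeff y.coeff 0 0
  rw [add_zero] at hextend
  exact HahnSeries.ext hextend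

end Reindex

section ReindexRingHom

variable {Γ Γ' A : Type*}
  [AddCommMonoid Γ] [PartialOrder Γ] [IsOrderedCancelAddMonoid Γ]
  [AddCommMonoid Γ'] [PartialOrder Γ'] [IsOrderedCancelAddMonoid Γ']

lemma antidiagonal_image {f : Γ → Γ'} (hf : Function.Injective f)
    (hadd : ∀ α β, f (α + β) = f α + f β) {s t : Set Γ} (hs : s.IsPWO) (ht : t.IsPWO)
    (hfs : (f '' s).IsPWO) (hft : (f '' t).IsPWO) (γ : Γ) :
    Finset.antidiagonal hfs hft (f γ) =
      (Finset.antidiagonal hs ht γ).map ⟨Prod.map f f, hf.prodMap hf⟩ := by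
  ext ⟨α', β'⟩
  simp only [Finset.mem_antidiagonal, Finset.mem_map, Function.Embedding.coeFn_mk]
  constructor
  · rintro ⟨⟨α, hα, rfl⟩, ⟨β, hβ, rfl⟩, hsum⟩
    exact ⟨(α, β), ⟨hα, hβ, hf ((hadd α β).trans hsum)⟩, rfl⟩
  · rintro ⟨⟨α, β⟩, ⟨hα, hβ, rfl⟩, h⟩
    obtain ⟨rfl, rfl⟩ := Prod.mk.inj h
    exact ⟨⟨α, hα, rfl⟩, ⟨β, hβ, rfl⟩, (hadd α β).symm⟩

lemma reindex_mul [NonUnitalNonAssocSemiring A] {f : Γ →o Γ'} (hf : Function.Injective f)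
    (hadd : ∀ α β, f (α + β) = f α + f β) (x y : HahnSeries Γ A) :
    reindex f (x * y) = reindex f x * reindex f y := by
  ext γ'
  by_cases hγ' : γ' ∈ Set.range f
  · obtain ⟨γ, rfl⟩ := hγ'
    simp only [coeff_reindex_apply hf, HahnSeries.coeff_mul, support_reindex hf,
      antidiagonal_image hf hadd x.isPWO_support y.isPWO_support, Finset.sum_map,
      Function.Embedding.coeFn_mk, Prod.map_fst, Prod.map_snd]
  · rw [coeff_reindex_of_notMem_range _ hγ', eq_comm]
    contrapose! hγ'
    obtain ⟨α', hα, β', hβ, rfl⟩ := HahnSeries.support_mul_subset hγ'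
    rw [support_reindex hf] at hα hβ
    obtain ⟨α, -, rfl⟩ := hα
    obtain ⟨β, -, rfl⟩ := hβ
    exact ⟨α + β, hadd α β⟩

/-- `reindex` along an injective monotone additive map, as a ring homomorphism. Unlike
`HahnSeries.embDomainRingHom`, it does not require the map to reflect the order. -/
noncomputable def reindexRingHom [NonAssocSemiring A] (f : Γ →+o Γ') (hf : Function.Injective f) :
    HahnSeries Γ A →+* HahnSeries Γ' A where
  toFun := reindex (f : Γ →o Γ')
  map_one' := (reindex_single hf 0 1).trans (congrArg (HahnSeries.single · 1) (map_zero f))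
  map_mul' := reindex_mul hf (map_add f)
  map_zero' := reindex_zero _
  map_add' := reindex_add _

end ReindexRingHom

section Shear

/-- The shear `(α, β) ↦ (α + β, β)` of exponents, which sends the exponents of `u^α v^β` to those of
`u^α (u v)^β`. -/
def blowupShear (Γ : Type*) [AddCommMonoid Γ] [PartialOrder Γ] [IsOrderedAddMonoid Γ] :
    Γ × Γ →+o Γ × Γ where
  toFun p := (p.1 + p.2, p.2)
  map_zero' := by simp
  map_add' p q := by simp [add_add_add_comm]
  monotone' _ _ h := ⟨add_le_add h.1 h.2, h.2⟩

variable {Γ : Type*} [AddCommMonoid Γ] [PartialOrder Γ]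

lemma blowupShear_apply [IsOrderedAddMonoid Γ] (p : Γ × Γ) :
    blowupShear Γ p = (p.1 + p.2, p.2) :=
  rfl

lemma blowupShear_injective [IsOrderedCancelAddMonoid Γ] :
    Function.Injective (blowupShear Γ) := by
  rintro ⟨α, β⟩ ⟨α', β'⟩ h
  obtain ⟨hsum, rfl⟩ := Prod.mk.inj h
  exact congrArg (·, β) (add_right_cancel hsum)

lemma blowupShear_sub [IsOrderedAddMonoid Γ] [ExistsAddOfLE Γ] [Sub Γ] [OrderedSub Γ]
    {q : Γ × Γ} (hq : q.2 ≤ q.1) :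
    blowupShear Γ (q.1 - q.2, q.2) = q := by
  rw [blowupShear_apply, tsub_add_cancel_of_le hq]

lemma coeff_reindex_blowupShear [IsOrderedCancelAddMonoid Γ] [CanonicallyOrderedAdd Γ] [Sub Γ]
    [OrderedSub Γ] [DecidableLE Γ] {A : Type*} [Zero A]
    (F : HahnSeries (Γ × Γ) A) (q : Γ × Γ) :
    (reindex (blowupShear Γ : Γ × Γ →o Γ × Γ) F).coeff q =
      if q.2 ≤ q.1 then F.coeff (q.1 - q.2, q.2) else 0 := by
  split_ifs with hq
  · conv_lhs => rw [← blowupShear_sub hq]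
    exact coeff_reindex_apply blowupShear_injective F _
  · refine coeff_reindex_of_notMem_range F ?_
    rintro ⟨p, rfl⟩
    exact hq le_add_self

end Shear

theorem blowup_zero_injective_ringHom_general (Γ A : Type*) [AddCommMonoid Γ] [PartialOrder Γ]
    [IsOrderedCancelAddMonoid Γ] [CanonicallyOrderedAdd Γ] [Sub Γ] [OrderedSub Γ] [DecidableLE Γ]
    [NonAssocSemiring A] :
    (∀ F : HahnSeries (Γ × Γ) A, (Function.support fun q : Γ × Γ ↦
        if q.2 ≤ q.1 then F.coeff (q.1 - q.2, q.2) else 0).IsPWO) ∧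
    ∃ T : HahnSeries (Γ × Γ) A →+* HahnSeries (Γ × Γ) A,
      Function.Injective T ∧
      ∀ (F : HahnSeries (Γ × Γ) A) (q : Γ × Γ),
        (T F).coeff q = if q.2 ≤ q.1 then F.coeff (q.1 - q.2, q.2) else 0 := by
  refine ⟨fun F ↦ ?_, reindexRingHom (blowupShear Γ) blowupShear_injective,
    reindex_injective blowupShear_injective, coeff_reindex_blowupShear⟩
  rw [← funext (coeff_reindex_blowupShear F)]
  exact (reindex _ F).isPWO_support

/-- For every `F` in the ring `R` of generalised power series in
two variables `u, v` over a commutative ring `A`, the coefficient function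
`(γ,δ) ↦ coeff F (γ−δ, δ)` (for `δ ≤ γ`, and `0` otherwise) has partially
well-ordered support, hence defines an element `T(F) ∈ R`; the resulting map
`T : R → R` (representing `F(u,v) ↦ F(u, u·v)`) is an injective ring
homomorphism. -/
theorem blowup_zero_injective_ringHom (A : Type*) [CommRing A] :
    (∀ F : HahnSeries (ℝ≥0 × ℝ≥0) A,
        (Function.support (blowupZeroCoeff F)).IsPWO) ∧
    ∃ T : HahnSeries (ℝ≥0 × ℝ≥0) A →+* HahnSeries (ℝ≥0 × ℝ≥0) A,
      Function.Injective T ∧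
      ∀ (F : HahnSeries (ℝ≥0 × ℝ≥0) A) (q : ℝ≥0 × ℝ≥0),
        (T F).coeff q = blowupZeroCoeff F q :=
  blowup_zero_injective_ringHom_general ℝ≥0 A
end
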